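/- The map G_{f₀} is strongly transitive on (𝒳, d): for all x, y ∈ 𝒳 and all r > 0, there exists z ∈ 𝒳 with d(z,x) ≤ r and an integer n ∈ ℕ* such that G_{f₀}^n(z) = y. -/

import Mathlib

/-!
One application of `Gf f0` to `(k, S⁰, S¹, …; E)` yields `(S⁰, S¹, …; E with cell k negated)`, so
every state `E` can be driven to every state by negating, one after the other, the cells where the
two differ, after which any prescribed strategy may follow (`Gf_f0_reach`). This can be done after
first running an arbitrary finite prefix of a given strategy (`Gf_f0_reach_of_start`). Take `z` with
the Boolean state of `x` and a strategy that starts with the first `m` terms of that of `x`: the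
distance to `x` is at most `10⁻ᵐ` (`dS_le_of_agree`).
-/

open scoped BigOperators

/-- Hamming-type distance between two Boolean states: number of differing cells. -/
noncomputable def dE {N : ℕ} (E F : Fin N → Bool) : ℝ :=
  ((Finset.univ.filter fun k => E k ≠ F k).card : ℝ)

/-- Distance between two strategies. -/
noncomputable def dS {N : ℕ} (S T : ℕ → Fin N) : ℝ :=
  (9 / (N : ℝ)) * ∑' k : ℕ, |((S k : ℕ) : ℝ) - ((T k : ℕ) : ℝ)| / 10 ^ (k + 1)

/-- Distance on the phase space 𝒳 = strategies × Boolean states. -/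
noncomputable def dX {N : ℕ} (x y : (ℕ → Fin N) × (Fin N → Bool)) : ℝ :=
  dE x.2 y.2 + dS x.1 y.1

/-- `F_f(k, E)`: iterate the `k`-th cell of `E` using `f`, leaving other cells unchanged. -/
def Ff {N : ℕ} (f : (Fin N → Bool) → Fin N → Bool) (k : Fin N)
    (E : Fin N → Bool) : Fin N → Bool :=
  fun j => if j = k then f E j else E j

/-- `G_f(S, E) = (σ(S), F_f(i(S), E))`, where `σ` is the shift and `i` the initial map. -/
def Gf {N : ℕ} (f : (Fin N → Bool) → Fin N → Bool)
    (x : (ℕ → Fin N) × (Fin N → Bool)) : (ℕ → Fin N) × (Fin N → Bool) :=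
  (fun n => x.1 (n + 1), Ff f (x.1 0) x.2)

/-- The vectorial negation `f₀(x₁, …, x_N) = (¬x₁, …, ¬x_N)`. -/
def f0 {N : ℕ} : (Fin N → Bool) → Fin N → Bool := fun E j => !(E j)

/-- Open sets of the metric topology induced by `dX` on the phase space 𝒳. -/
def isOpenX {N : ℕ} (U : Set ((ℕ → Fin N) × (Fin N → Bool))) : Prop :=
  ∀ x ∈ U, ∃ ε > 0, ∀ y, dX x y < ε → y ∈ U

/-- The strategy `k, S 0, S 1, …`. -/
def consStrategy {N : ℕ} (k : Fin N) (S : ℕ → Fin N) : ℕ → Fin N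
  | 0 => k
  | n + 1 => S n

lemma Gf_consStrategy {N : ℕ} (k : Fin N) (S : ℕ → Fin N) (E : Fin N → Bool) :
    Gf f0 (consStrategy k S, E) = (S, Ff f0 k E) := rfl

/-- Every point of the phase space is reached from every Boolean state under a suitable strategy.
The induction is on the set `s` of cells where the two Boolean states differ. -/
lemma Gf_f0_reach {N : ℕ} (y : (ℕ → Fin N) × (Fin N → Bool)) (s : Finset (Fin N)) :
    ∀ E : Fin N → Bool, (∀ j, E j ≠ y.2 j ↔ j ∈ s) →
      ∃ (T : ℕ → Fin N) (n : ℕ), (Gf f0)^[n] (T, E) = y := by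
  induction s using Finset.induction_on with
  | empty =>
    intro E hE
    have h : E = y.2 := funext fun j => by simpa using hE j
    exact ⟨y.1, 0, by simp [h]⟩
  | insert a s ha ih =>
    intro E hE
    obtain ⟨T, n, h⟩ := ih (Ff f0 a E) (by
      intro j
      have hj := hE j
      by_cases hja : j = a
      · subst hja
        simp only [Finset.mem_insert_self, iff_true] at hj
        simpa [Ff, f0, ha, Bool.not_eq] using hj
      · simpa [Ff, hja] using hj)
    exact ⟨consStrategy a T, n + 1, by rw [Function.iterate_succ_apply, Gf_consStrategy, h]⟩

lemma Gf_f0_reach_of_start {N : ℕ} (y : (ℕ → Fin N) × (Fin N → Bool)) (m : ℕ) :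
    ∀ (S : ℕ → Fin N) (E : Fin N → Bool), ∃ (T : ℕ → Fin N) (n : ℕ),
      (∀ k < m, T k = S k) ∧ m ≤ n ∧ (Gf f0)^[n] (T, E) = y := by
  induction m with
  | zero =>
    intro S E
    obtain ⟨T, n, h⟩ := Gf_f0_reach y (Finset.univ.filter fun j => E j ≠ y.2 j) E (by simp)
    exact ⟨T, n, by simp, Nat.zero_le n, h⟩
  | succ m ih =>
    intro S E
    obtain ⟨T, n, hT, hn, h⟩ := ih (fun k => S (k + 1)) (Ff f0 (S 0) E)
    refine ⟨consStrategy (S 0) T, n + 1, ?_, by omega, ?_⟩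
    · rintro (_ | k) hk
      · rfl
      · exact hT k (by omega)
    · rw [Function.iterate_succ_apply, Gf_consStrategy, h]

/-- The tail is dominated by the geometric series `∑ N / 10 ^ (i + m + 1) = N / (9 * 10 ^ m)`. -/
lemma dS_le_of_agree {N : ℕ} (hN : 1 ≤ N) (S T : ℕ → Fin N) (m : ℕ)
    (h : ∀ k < m, S k = T k) : dS S T ≤ (1 / 10 : ℝ) ^ m := by
  have hN' : (0 : ℝ) < N := by exact_mod_cast hN
  have hgeo : HasSum (fun k : ℕ => (N : ℝ) / 10 * (1 / 10) ^ k) (N / 9) := by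
    have := (hasSum_geometric_of_lt_one (r := (1 / 10 : ℝ)) (by norm_num) (by norm_num)).mul_left
      ((N : ℝ) / 10)
    have he : (N : ℝ) / 10 * (1 - 1 / 10)⁻¹ = N / 9 := by
      rw [show (1 - 1 / 10 : ℝ)⁻¹ = 10 / 9 by norm_num]
      ring
    rwa [he] at this
  have hb : ∀ k : ℕ, |((S k : ℕ) : ℝ) - ((T k : ℕ) : ℝ)| / 10 ^ (k + 1)
      ≤ (N : ℝ) / 10 * (1 / 10) ^ k := by
    intro k
    have hS : ((S k : ℕ) : ℝ) ≤ N := by exact_mod_cast (S k).2.le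
    have hT : ((T k : ℕ) : ℝ) ≤ N := by exact_mod_cast (T k).2.le
    have habs : |((S k : ℕ) : ℝ) - ((T k : ℕ) : ℝ)| ≤ N :=
      abs_sub_le_of_nonneg_of_le (Nat.cast_nonneg _) hS (Nat.cast_nonneg _) hT
    calc _ ≤ (N : ℝ) / 10 ^ (k + 1) := by gcongr
      _ = _ := by rw [one_div, inv_pow, pow_succ]; field_simp
  have hsum : Summable fun k : ℕ => |((S k : ℕ) : ℝ) - ((T k : ℕ) : ℝ)| / 10 ^ (k + 1) :=
    Summable.of_nonneg_of_le (fun k => by positivity) hb hgeo.summable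
  have hzero : ∑ k ∈ Finset.range m, |((S k : ℕ) : ℝ) - ((T k : ℕ) : ℝ)| / 10 ^ (k + 1) = 0 :=
    Finset.sum_eq_zero fun k hk => by simp [h k (Finset.mem_range.1 hk)]
  have htail : ∑' k : ℕ, |((S k : ℕ) : ℝ) - ((T k : ℕ) : ℝ)| / 10 ^ (k + 1)
      ≤ N / 9 * (1 / 10) ^ m := by
    rw [← hsum.sum_add_tsum_nat_add m, hzero, zero_add]
    have hg := hgeo.mul_right ((1 / 10 : ℝ) ^ m)
    refine (((summable_nat_add_iff m).2 hsum).tsum_le_tsum (fun i => ?_) hg.summable).trans_eq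
      hg.tsum_eq
    exact (hb (i + m)).trans_eq (by ring)
  calc dS S T ≤ 9 / (N : ℝ) * (N / 9 * (1 / 10) ^ m) := by unfold dS; gcongr
    _ = (1 / 10) ^ m := by field_simp

/-- `G_{f₀}` is strongly transitive on `(𝒳, d)`. -/
theorem Gf0_strongly_transitive (N : ℕ) (hN : 1 ≤ N) :
    ∀ x y : (ℕ → Fin N) × (Fin N → Bool), ∀ r > (0 : ℝ),
      ∃ z : (ℕ → Fin N) × (Fin N → Bool), dX z x ≤ r ∧
        ∃ n : ℕ, 0 < n ∧ (Gf f0)^[n] z = y := by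
  intro x y r hr
  obtain ⟨m, hm⟩ := exists_pow_lt_of_lt_one hr (by norm_num : (1 / 10 : ℝ) < 1)
  -- A prefix of length `m + 1` rather than `m` makes the number of iterations positive.
  obtain ⟨T, n, hT, hn, h⟩ := Gf_f0_reach_of_start y (m + 1) x.1 x.2
  refine ⟨(T, x.2), ?_, n, by omega, h⟩
  have hd := dS_le_of_agree hN T x.1 m fun k hk => hT k (by omega)
  have hE : dE x.2 x.2 = 0 := by simp [dE]
  change dE x.2 x.2 + dS T x.1 ≤ r
  linarith
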